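/- Let ω be a smooth p-form on an open set U ⊆ ℝⁿ and x ∈ U. Then ω has constant coefficients on a neighbourhood of x if and only if there exist an open neighbourhood V of x and a torsion-free flat linear connection Γ on V such that ∇ω = 0 on V. -/

import Mathlib

/-- Constant coefficients for a `p`-form (see context). -/
def HasConstantCoefficientsFormAt (n p : ℕ) (U : Set (Fin n → ℝ))
    (ω : (Fin n → ℝ) → ((Fin n → ℝ) [×p]→L[ℝ] ℝ)) (x : Fin n → ℝ) : Prop :=
  ∃ V : Set (Fin n → ℝ), IsOpen V ∧ x ∈ V ∧ V ⊆ U ∧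
    ∃ u : (Fin n → ℝ) → (Fin n → ℝ),
      ContDiffOn ℝ (⊤ : ℕ∞) u V ∧ Set.InjOn u V ∧ IsOpen (u '' V) ∧
      (∀ y ∈ V, Function.Bijective (fderiv ℝ u y)) ∧
      ∃ c : (Fin n → ℝ) [×p]→L[ℝ] ℝ,
        ∀ y ∈ V, ∀ v : Fin p → (Fin n → ℝ),
          ω y v = c (fun i => fderiv ℝ u y (v i))

/-!
If `u` straightens `ω`, pull back the trivial connection: `Γ = (Du)⁻¹ D²u`.

Conversely, `∇ω = 0` makes `ω` constant on parallel vector fields, so it suffices to find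
coordinates whose coordinate fields are parallel. Their differential is a coframe `A` with
`dA = A ∘ Γ` and `A x = 1`. Flatness of `Γ` is the formal integrability of this total differential
system, which is solved by transport along the rays `γ` issued from `x`: transport depends
differentiably on the endpoint, and by flatness `h ↦ t Γ(h)`, applied to the transported coframe,
solves the variational equation, so that at `t = 1` the derivative is the prescribed one. Since `Γ`
is torsion-free, `DA` is symmetric and the Poincaré lemma gives `A = Du`; near `x` the map `u` is a
chart by the inverse function theorem.
-/

open Set Metric Filter
open scoped Topology NNReal

section LinearODE

theorem eventually_forall_mem_norm_sub_lt {X T F : Type*} [TopologicalSpace X]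
    [TopologicalSpace T] [SeminormedAddCommGroup F] {f : X → T → F} {K : Set T} {y : X}
    (hK : IsCompact K)
    (hf : ∀ t ∈ K, ContinuousAt (fun q : X × T ↦ f q.1 q.2) (y, t)) {ε : ℝ} (hε : 0 < ε) :
    ∀ᶠ z in 𝓝 y, ∀ t ∈ K, ‖f z t - f y t‖ < ε := by
  refine hK.eventually_forall_of_forall_eventually fun t ht ↦ ?_
  have hft : ContinuousAt (fun q : X × T ↦ f y q.2) (y, t) :=
    (hf t ht).comp (f := fun q : X × T ↦ (y, q.2)) (x := (y, t)) (by fun_prop)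
  exact ((hf t ht).sub hft).norm.eventually_lt_const (by simpa using hε)

variable {P F T : Type*} [NormedAddCommGroup P] [NormedSpace ℝ P]
  [NormedAddCommGroup F] [NormedSpace ℝ F] [TopologicalSpace T]

theorem eventually_forall_mem_norm_sub_sub_le {f : P → T → F} {f' : P → T → P →L[ℝ] F}
    {K : Set T} {y : P} (hK : IsCompact K)
    (hf : ∀ᶠ z in 𝓝 y, ∀ t ∈ K, HasFDerivAt (f · t) (f' z t) z)
    (hf' : ∀ t ∈ K, ContinuousAt (fun q : P × T ↦ f' q.1 q.2) (y, t))
    {ε : ℝ} (hε : 0 < ε) :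
    ∀ᶠ z in 𝓝 y, ∀ t ∈ K, ‖f z t - f y t - f' y t (z - y)‖ ≤ ε * ‖z - y‖ := by
  obtain ⟨r, hr, hball⟩ := eventually_nhds_iff_ball.1
    (hf.and (eventually_forall_mem_norm_sub_lt hK hf' hε))
  filter_upwards [ball_mem_nhds y hr] with z hz t ht
  exact (convex_ball y r).norm_image_sub_le_of_norm_hasFDerivWithin_le'
    (fun w hw ↦ ((hball w hw).1 t ht).hasFDerivWithinAt)
    (fun w hw ↦ ((hball w hw).2 t ht).le) (mem_ball_self hr) hz

theorem exists_isIntegralCurveOn_clm [CompleteSpace F] {g : ℝ → F →L[ℝ] F} {a b : ℝ}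
    (hab : a ≤ b) (hg : ContinuousOn g (Icc a b)) {C : ℝ≥0}
    (hC : ∀ t ∈ Icc a b, ‖g t‖ ≤ C) (hCab : C * (b - a) ≤ 1 / 2) (s₀ : F) :
    ∃ α : ℝ → F, α a = s₀ ∧ IsIntegralCurveOn α (fun t ↦ g t) (Icc a b) := by
  have picard : IsPicardLindelof (fun t ↦ g t) (⟨a, left_mem_Icc.2 hab⟩ : Icc a b) s₀
      ‖s₀‖₊ 0 (C * (2 * ‖s₀‖₊)) C :=
    { lipschitzOnWith := fun t ht ↦ ((g t).lipschitz.weaken (hC t ht)).lipschitzOnWith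
      continuousOn := fun s _ ↦ hg.clm_apply continuousOn_const
      norm_le := fun t ht s hs ↦ by
        have hs₀ : ‖s‖ ≤ 2 * ‖s₀‖ := by
          linarith [norm_le_norm_add_norm_sub' s s₀, mem_closedBall_iff_norm.1 hs, coe_nnnorm s₀]
        exact (g t).le_of_opNorm_le_of_le (hC t ht) hs₀
      mul_max_le := by
        simp only [sub_self, max_eq_left (sub_nonneg.2 hab), NNReal.coe_mul, NNReal.coe_ofNat,
          coe_nnnorm, NNReal.coe_zero, sub_zero]
        nlinarith [norm_nonneg s₀] }
  exact picard.exists_eq_forall_mem_Icc_hasDerivWithinAt₀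

theorem gronwallBound_zero_mul (K c ε x : ℝ) :
    gronwallBound 0 K (c * ε) x = c * gronwallBound 0 K ε x := by
  unfold gronwallBound
  split_ifs <;> ring

theorem norm_sub_le_gronwallBound_of_isIntegralCurveOn {g : ℝ → F →L[ℝ] F}
    {α β β' : ℝ → F} {a b δ : ℝ} {C : ℝ≥0} (hab : a ≤ b) (hC : ∀ t ∈ Icc a b, ‖g t‖ ≤ C)
    (hα : IsIntegralCurveOn α (fun t ↦ g t) (Icc a b))
    (hβ : ∀ t ∈ Icc a b, HasDerivWithinAt β (β' t) (Icc a b) t)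
    (hδ : ∀ t ∈ Icc a b, ‖g t (β t) - β' t‖ ≤ δ) (h₀ : α a = β a) :
    ‖α b - β b‖ ≤ gronwallBound 0 C δ (b - a) := by
  have right_deriv {γ : ℝ → F} {γ' : F} {t : ℝ} (ht : t ∈ Ico a b)
      (h : HasDerivWithinAt γ γ' (Icc a b) t) : HasDerivWithinAt γ γ' (Ici t) t :=
    h.mono_of_mem_nhdsWithin (Icc_mem_nhdsGE_of_mem ht)
  have key := dist_le_of_approx_trajectories_ODE_of_mem (v := fun t ↦ g t) (K := C) (δ := 0)
    (s := fun _ ↦ univ) (εf := 0) (εg := δ) (f := α) (g := β)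
    (fun t ht ↦ ((g t).lipschitz.weaken (hC t (Ico_subset_Icc_self ht))).lipschitzOnWith)
    hα.continuousOn (fun t ht ↦ right_deriv ht (hα t (Ico_subset_Icc_self ht)))
    (fun t _ ↦ (dist_self _).le) (fun _ _ ↦ mem_univ _)
    (fun t ht ↦ (hβ t ht).continuousWithinAt)
    (fun t ht ↦ right_deriv ht (hβ t (Ico_subset_Icc_self ht)))
    (fun t ht ↦ by rw [dist_comm, dist_eq_norm]; exact hδ t (Ico_subset_Icc_self ht))
    (fun _ _ ↦ mem_univ _) (by simp [h₀]) b (right_mem_Icc.2 hab)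
  rwa [dist_eq_norm, zero_add] at key

theorem norm_apply_add_sub_linearization_le {A A₀ A₁ : F →L[ℝ] F} {u w : F} {η ε S d : ℝ}
    (hA₁ : ‖A - A₀ - A₁‖ ≤ η) (hA₀ : ‖A - A₀‖ ≤ ε) (hu : ‖u‖ ≤ S) (hw : ‖w‖ ≤ d) :
    ‖A (u + w) - (A₀ u + (A₀ w + A₁ u))‖ ≤ η * S + ε * d := by
  calc _ = ‖(A - A₀ - A₁) u + (A - A₀) w‖ := by simp only [map_add, sub_apply]; congr 1; abel
    _ ≤ η * S + ε * d := norm_add_le_of_le (ContinuousLinearMap.le_of_opNorm_le_of_le _ hA₁ hu)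
        (ContinuousLinearMap.le_of_opNorm_le_of_le _ hA₀ hw)

/-- The linearization `α y + J (z - y)` solves the equation of parameter `z` up to `o(z - y)`, and
Grönwall's inequality compares it with `α z`. -/
theorem hasFDerivAt_of_variationalEquation {φ : P → ℝ → F →L[ℝ] F} {φ' : P → ℝ → P →L[ℝ] F →L[ℝ] F}
    {α : P → ℝ → F} {J : ℝ → P →L[ℝ] F} {s₀ : F} {y : P} {a b : ℝ} (hab : a ≤ b)
    (hφ : ∀ᶠ z in 𝓝 y, ∀ t ∈ Icc a b, HasFDerivAt (φ · t) (φ' z t) z)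
    (hφc : ∀ t ∈ Icc a b, ContinuousAt (fun q : P × ℝ ↦ φ q.1 q.2) (y, t))
    (hφ' : ∀ t ∈ Icc a b, ContinuousAt (fun q : P × ℝ ↦ φ' q.1 q.2) (y, t))
    (hα₀ : ∀ᶠ z in 𝓝 y, α z a = s₀)
    (hα : ∀ᶠ z in 𝓝 y, IsIntegralCurveOn (α z) (fun t ↦ φ z t) (Icc a b))
    (hJ₀ : J a = 0)
    (hJ : ∀ t ∈ Icc a b,
      HasDerivWithinAt J ((φ y t) ∘L (J t) + (φ' y t).flip (α y t)) (Icc a b) t) :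
    HasFDerivAt (α · b) (J b) y := by
  have hφyc : ContinuousOn (φ y) (Icc a b) := fun t ht ↦
    ((hφc t ht).comp' (f := fun t ↦ (y, t)) (by fun_prop)).continuousWithinAt
  obtain ⟨C, hC⟩ := isCompact_Icc.exists_bound_of_continuousOn hφyc
  obtain ⟨S, hS⟩ := isCompact_Icc.exists_bound_of_continuousOn hα.self_of_nhds.continuousOn
  obtain ⟨D, hD⟩ := isCompact_Icc.exists_bound_of_continuousOn
    (fun t ht ↦ (hJ t ht).continuousWithinAt)
  have hC0 : 0 ≤ C + 1 := by
    linarith [(norm_nonneg _).trans (hC a (left_mem_Icc.2 hab))]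
  lift C + 1 to ℝ≥0 using hC0 with C' hC'
  rw [hasFDerivAt_iff_isLittleO, Asymptotics.isLittleO_iff]
  intro c hc
  obtain ⟨ε, hε, hεc⟩ := exists_pos_mul_lt hc (gronwallBound 0 C' (S + D) (b - a))
  filter_upwards [hα, hα₀,
    eventually_forall_mem_norm_sub_sub_le isCompact_Icc hφ hφ' hε,
    eventually_forall_mem_norm_sub_lt isCompact_Icc hφc hε,
    eventually_forall_mem_norm_sub_lt isCompact_Icc hφc one_pos] with z hαz hα₀z hz₂ hz₁ hz₀
  have hC'z : ∀ t ∈ Icc a b, ‖φ z t‖ ≤ C' := fun t ht ↦ by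
    linarith [norm_le_norm_add_norm_sub' (φ z t) (φ y t), hC t ht, hz₀ t ht]
  have hβ : ∀ t ∈ Icc a b, HasDerivWithinAt (fun t ↦ α y t + J t (z - y))
      (φ y t (α y t) + (φ y t (J t (z - y)) + φ' y t (z - y) (α y t))) (Icc a b) t := fun t ht ↦ by
    simpa only [map_zero, add_zero, add_apply, ContinuousLinearMap.comp_apply,
      ContinuousLinearMap.flip_apply] using (hα.self_of_nhds t ht).fun_add
        ((hJ t ht).clm_apply (hasDerivWithinAt_const t _ (z - y)))
  have residual : ∀ t ∈ Icc a b,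
      ‖φ z t (α y t + J t (z - y)) -
        (φ y t (α y t) + (φ y t (J t (z - y)) + φ' y t (z - y) (α y t)))‖ ≤
      ε * ‖z - y‖ * (S + D) := fun t ht ↦
    (norm_apply_add_sub_linearization_le (hz₂ t ht) (hz₁ t ht).le (hS t ht)
      ((J t).le_of_opNorm_le (hD t ht) _)).trans_eq (by ring)
  have key := norm_sub_le_gronwallBound_of_isIntegralCurveOn hab hC'z hαz hβ residual
    (by simp [hα₀z, hα₀.self_of_nhds, hJ₀])
  rw [gronwallBound_zero_mul] at key
  calc ‖α z b - α y b - J b (z - y)‖ = ‖α z b - (α y b + J b (z - y))‖ := by rw [sub_sub]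
    _ ≤ ε * ‖z - y‖ * gronwallBound 0 C' (S + D) (b - a) := key
    _ = gronwallBound 0 C' (S + D) (b - a) * ε * ‖z - y‖ := by ring
    _ ≤ c * ‖z - y‖ := by gcongr

end LinearODE

section FlatSystem

set_option maxSynthPendingDepth 3

variable {E F : Type*} [NormedAddCommGroup E] [NormedSpace ℝ E]
  [NormedAddCommGroup F] [NormedSpace ℝ F] {Ω : E → E →L[ℝ] F →L[ℝ] F} {V : Set E} {x y : E}

/-- Flatness of the total differential equation `Ds_y(v) = Ω_y(v) s(y)` (`-Ω` is the connection
form): the right-hand side of the formal second derivative of a solution is symmetric. -/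
def IsFlatSystemOn (Ω : E → E →L[ℝ] F →L[ℝ] F) (V : Set E) : Prop :=
  ∀ y ∈ V, ∀ v w : E,
    fderiv ℝ Ω y v w + Ω y w ∘L Ω y v = fderiv ℝ Ω y w v + Ω y v ∘L Ω y w

/-- Solutions on `V` of the total differential equation `Ds_y(v) = Ω_y(v) s(y)`. -/
def IsSolutionOn (Ω : E → E →L[ℝ] F →L[ℝ] F) (s : E → F) (V : Set E) : Prop :=
  ∀ y ∈ V, HasFDerivAt s ((Ω y).flip (s y)) y

/-- The coefficient at time `t` of the linear ODE which the system `Ds = Ω s` induces along the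
segment from `x` to `z`, parametrised by `[0, 1]`. -/
noncomputable def radialCoeff (Ω : E → E →L[ℝ] F →L[ℝ] F) (x z : E) (t : ℝ) : F →L[ℝ] F :=
  Ω (x + t • (z - x)) (z - x)

/-- The derivative of `radialCoeff Ω x z t` in the endpoint `z`. -/
noncomputable def radialCoeffFDeriv (Ω : E → E →L[ℝ] F →L[ℝ] F) (x z : E) (t : ℝ) :
    E →L[ℝ] F →L[ℝ] F :=
  t • (fderiv ℝ Ω (x + t • (z - x))).flip (z - x) + Ω (x + t • (z - x))

theorem hasFDerivAt_radialCoeff {t : ℝ} (hΩ : DifferentiableAt ℝ Ω (x + t • (y - x))) :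
    HasFDerivAt (radialCoeff Ω x · t) (radialCoeffFDeriv Ω x y t) y := by
  have hsub : HasFDerivAt (fun z ↦ z - x) (.id ℝ E) y := (hasFDerivAt_id y).sub_const x
  have hpoint : HasFDerivAt (fun z ↦ x + t • (z - x)) (t • .id ℝ E) y :=
    (hsub.const_smul t).const_add x
  refine ((hΩ.hasFDerivAt.comp y hpoint).clm_apply hsub).congr_fderiv ?_
  ext h
  simp [radialCoeffFDeriv, add_comm]

theorem continuousAt_radialCoeff {t : ℝ} (hΩ : ContinuousAt Ω (x + t • (y - x))) :
    ContinuousAt (fun q : E × ℝ ↦ radialCoeff Ω x q.1 q.2) (y, t) := by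
  have hcomp : ContinuousAt (fun q : E × ℝ ↦ Ω (x + q.2 • (q.1 - x))) (y, t) :=
    hΩ.comp (f := fun q : E × ℝ ↦ x + q.2 • (q.1 - x)) (x := (y, t)) (by fun_prop)
  exact hcomp.clm_apply (by fun_prop)

theorem continuousAt_radialCoeffFDeriv {t : ℝ} (hΩ : ContinuousAt Ω (x + t • (y - x)))
    (hΩ' : ContinuousAt (fderiv ℝ Ω) (x + t • (y - x))) :
    ContinuousAt (fun q : E × ℝ ↦ radialCoeffFDeriv Ω x q.1 q.2) (y, t) := by
  have hpoint : ContinuousAt (fun q : E × ℝ ↦ x + q.2 • (q.1 - x)) (y, t) := by fun_prop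
  have hfderiv := hΩ'.comp (f := fun q : E × ℝ ↦ x + q.2 • (q.1 - x)) (x := (y, t)) hpoint
  have hflip : ContinuousAt
      (fun q : E × ℝ ↦ (fderiv ℝ Ω (x + q.2 • (q.1 - x))).flip) (y, t) :=
    (ContinuousLinearMap.flipₗᵢ ℝ E E (F →L[ℝ] F)).continuous.continuousAt.comp hfderiv
  exact (continuousAt_snd.smul (hflip.clm_apply (by fun_prop))).add
    (hΩ.comp (f := fun q : E × ℝ ↦ x + q.2 • (q.1 - x)) (x := (y, t)) hpoint)

/-- This is the variational equation of transport along the segment from `x` to `y`; flatness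
exchanges the direction of the segment with that of the variation. -/
theorem IsFlatSystemOn.hasDerivWithinAt_smul_flip (hflat : IsFlatSystemOn Ω V) {t : ℝ} {T : Set ℝ}
    (hy : x + t • (y - x) ∈ V) (hΩ : DifferentiableAt ℝ Ω (x + t • (y - x))) {α : ℝ → F}
    (hα : HasDerivWithinAt α (radialCoeff Ω x y t (α t)) T t) :
    HasDerivWithinAt (fun t ↦ t • (Ω (x + t • (y - x))).flip (α t))
      (radialCoeff Ω x y t ∘L (t • (Ω (x + t • (y - x))).flip (α t)) +
        (radialCoeffFDeriv Ω x y t).flip (α t)) T t := by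
  have hpoint : HasDerivWithinAt (fun t : ℝ ↦ x + t • (y - x)) (y - x) T t := by
    simpa using ((hasDerivWithinAt_id t T).smul_const (y - x)).const_add x
  have hΩγ := hΩ.hasFDerivAt.comp_hasDerivWithinAt t hpoint
  have hflip : HasDerivWithinAt (fun t : ℝ ↦ (Ω (x + t • (y - x))).flip)
      (fderiv ℝ Ω (x + t • (y - x)) (y - x)).flip T t :=
    (ContinuousLinearMap.flipₗᵢ ℝ E F F).toContinuousLinearEquiv.hasFDerivAt.comp_hasDerivWithinAt
      t hΩγ
  refine ((hasDerivWithinAt_id t T).fun_smul (hflip.clm_apply hα)).congr_deriv ?_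
  ext h
  have hsymm := congr($(hflat _ hy (y - x) h) (α t))
  simp only [add_apply, ContinuousLinearMap.comp_apply] at hsymm
  simp only [radialCoeff, radialCoeffFDeriv, id, one_smul, add_apply, smul_apply,
    ContinuousLinearMap.comp_apply, ContinuousLinearMap.flip_apply, map_smul]
  linear_combination (norm := module) t • hsymm

theorem norm_radialCoeff_le {r : ℝ} {C : ℝ≥0} (hC : ∀ z ∈ ball x r, ‖Ω z‖ ≤ C)
    (hy : y ∈ ball x r) {t : ℝ} (ht : t ∈ Icc (0 : ℝ) 1) :
    ‖radialCoeff Ω x y t‖ ≤ C * r :=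
  have hyr := mem_ball_iff_norm.1 hy
  ContinuousLinearMap.le_of_opNorm_le_of_le _
    (hC _ ((convex_ball x r).add_smul_sub_mem
      (mem_ball_self ((norm_nonneg _).trans_lt hyr)) hy ht)) hyr.le

theorem exists_isIntegralCurveOn_radialCoeff [CompleteSpace F] {r : ℝ} {C : ℝ≥0}
    (hΩ : ContinuousOn Ω (ball x r)) (hC : ∀ z ∈ ball x r, ‖Ω z‖ ≤ C) (hCr : C * r ≤ 1 / 2)
    (hy : y ∈ ball x r) (s₀ : F) :
    ∃ α : ℝ → F, α 0 = s₀ ∧ IsIntegralCurveOn α (fun t ↦ radialCoeff Ω x y t) (Icc 0 1) := by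
  have hr : 0 < r := (norm_nonneg _).trans_lt (mem_ball_iff_norm.1 hy)
  have hcont : ContinuousOn (radialCoeff Ω x y) (Icc 0 1) := fun t ht ↦ by
    have hmem := (convex_ball x r).add_smul_sub_mem (mem_ball_self hr) hy ht
    have := continuousAt_radialCoeff (hΩ.continuousAt (isOpen_ball.mem_nhds hmem))
    exact (this.comp (f := fun t ↦ (y, t)) (by fun_prop)).continuousWithinAt
  exact exists_isIntegralCurveOn_clm zero_le_one hcont (C := C * r.toNNReal)
    (fun t ht ↦ by simpa [hr.le] using norm_radialCoeff_le hC hy ht) (by simpa [hr.le] using hCr) s₀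

theorem eq_of_isIntegralCurveOn_radialCoeff_self {α : ℝ → F}
    (hα : IsIntegralCurveOn α (fun t ↦ radialCoeff Ω x x t) (Icc 0 1)) : α 1 = α 0 := by
  refine constant_of_derivWithin_zero (fun t ht ↦ (hα t ht).differentiableWithinAt)
    (fun t ht ↦ ?_) 1 (right_mem_Icc.2 zero_le_one)
  simpa [radialCoeff] using (hα t (Ico_subset_Icc_self ht)).derivWithin
    (uniqueDiffOn_Icc zero_lt_one t (Ico_subset_Icc_self ht))

theorem IsFlatSystemOn.exists_isSolutionOn_ball [CompleteSpace F] {r : ℝ} {C : ℝ≥0}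
    (hflat : IsFlatSystemOn Ω (ball x r)) (hΩ : ContDiffOn ℝ 1 Ω (ball x r)) (hr : 0 < r)
    (hC : ∀ y ∈ ball x r, ‖Ω y‖ ≤ C) (hCr : C * r ≤ 1 / 2) (s₀ : F) :
    ∃ s : E → F, s x = s₀ ∧ IsSolutionOn Ω s (ball x r) := by
  have hΩ' : ∀ y ∈ ball x r, ContDiffAt ℝ 1 Ω y := fun y hy ↦
    hΩ.contDiffAt (isOpen_ball.mem_nhds hy)
  have hray {y : E} (hy : y ∈ ball x r) {t : ℝ} (ht : t ∈ Icc (0 : ℝ) 1) :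
      x + t • (y - x) ∈ ball x r := (convex_ball x r).add_smul_sub_mem (mem_ball_self hr) hy ht
  have transport (y : E) (hy : y ∈ ball x r) :=
    exists_isIntegralCurveOn_radialCoeff hΩ.continuousOn hC hCr hy s₀
  choose! α hα₀ hα using transport
  refine ⟨(α · 1), ?_, fun y hy ↦ ?_⟩
  · exact (eq_of_isIntegralCurveOn_radialCoeff_self (hα x (mem_ball_self hr))).trans
      (hα₀ x (mem_ball_self hr))
  have hnear : ∀ᶠ z in 𝓝 y, z ∈ ball x r := isOpen_ball.mem_nhds hy
  have key := hasFDerivAt_of_variationalEquation zero_le_one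
    (hnear.mono fun z hz t ht ↦
      hasFDerivAt_radialCoeff ((hΩ' _ (hray hz ht)).differentiableAt one_ne_zero))
    (fun t ht ↦ continuousAt_radialCoeff (hΩ' _ (hray hy ht)).continuousAt)
    (fun t ht ↦ continuousAt_radialCoeffFDeriv (hΩ' _ (hray hy ht)).continuousAt
      ((hΩ' _ (hray hy ht)).continuousAt_fderiv one_ne_zero))
    (hnear.mono hα₀) (hnear.mono hα) (zero_smul ℝ _)
    (fun t ht ↦ hflat.hasDerivWithinAt_smul_flip (hray hy ht)
      ((hΩ' _ (hray hy ht)).differentiableAt one_ne_zero) (hα y hy t ht))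
  simpa using key

theorem IsFlatSystemOn.exists_isSolutionOn [CompleteSpace F] (hflat : IsFlatSystemOn Ω V)
    (hV : IsOpen V) (hΩ : ContDiffOn ℝ 1 Ω V) (hx : x ∈ V) (s₀ : F) :
    ∃ r > 0, ball x r ⊆ V ∧ ∃ s : E → F, s x = s₀ ∧ IsSolutionOn Ω s (ball x r) := by
  have hnorm := hΩ.continuousOn.norm.continuousAt (hV.mem_nhds hx)
  have hbound : ∀ᶠ y in 𝓝 x, ‖Ω y‖ ≤ ‖Ω x‖₊ + 1 := by
    filter_upwards [hnorm.eventually_le_const (lt_add_one ‖Ω x‖)] with y hy using hy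
  obtain ⟨R, hR, hball⟩ := eventually_nhds_iff_ball.1 (hbound.and (hV.mem_nhds hx))
  obtain ⟨ρ, hρ, hCρ⟩ := exists_pos_mul_lt one_half_pos (‖Ω x‖ + 1)
  have hsub : ball x (min R ρ) ⊆ ball x R := ball_subset_ball (min_le_left R ρ)
  have hrV : ball x (min R ρ) ⊆ V := fun y hy ↦ (hball y (hsub hy)).2
  refine ⟨min R ρ, lt_min hR hρ, hrV, IsFlatSystemOn.exists_isSolutionOn_ball
    (fun y hy ↦ hflat y (hrV hy)) (hΩ.mono hrV) (lt_min hR hρ) (C := ‖Ω x‖₊ + 1)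
    (fun y hy ↦ by simpa using (hball y (hsub hy)).1) ?_ s₀⟩
  calc ((‖Ω x‖₊ + 1 : ℝ≥0) : ℝ) * min R ρ ≤ (‖Ω x‖ + 1) * ρ := by
        push_cast [coe_nnnorm]; gcongr; exact min_le_right R ρ
    _ ≤ 1 / 2 := hCρ.le

theorem IsSolutionOn.contDiffOn {s : E → F} (hs : IsSolutionOn Ω s V) (hV : IsOpen V)
    (hΩ : ContDiffOn ℝ (⊤ : ℕ∞) Ω V) : ContDiffOn ℝ (⊤ : ℕ∞) s V := by
  refine contDiffOn_infty.2 fun n ↦ ?_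
  induction n with
  | zero => exact contDiffOn_zero.2 fun y hy ↦ (hs y hy).continuousAt.continuousWithinAt
  | succ n ih =>
    rw [Nat.cast_succ, contDiffOn_succ_iff_fderiv_of_isOpen hV]
    refine ⟨fun y hy ↦ (hs y hy).differentiableAt.differentiableWithinAt, by simp, ?_⟩
    have hflip : ContDiffOn ℝ n (fun y ↦ (Ω y).flip) V :=
      (ContinuousLinearMap.flipₗᵢ ℝ E F F).contDiff.comp_contDiffOn
        (hΩ.of_le (mod_cast (le_top : (n : ℕ∞) ≤ ⊤)))
    exact (hflip.clm_apply ih).congr fun y hy ↦ (hs y hy).fderiv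

end FlatSystem

section Connection

variable {E F ι : Type*} [NormedAddCommGroup E] [NormedSpace ℝ E]
  [NormedAddCommGroup F] [NormedSpace ℝ F]

/-- A linear connection on an open subset of `E`, given by its Christoffel symbols:
`∇_v X = D X(v) + Γ(v, X)`. -/
abbrev ChristoffelField (E : Type*) [NormedAddCommGroup E] [NormedSpace ℝ E] : Type _ :=
  E → E →L[ℝ] E →L[ℝ] E

/-- Constant coefficients near `x`, for a field of multilinear maps on a normed space. -/
def HasConstantCoefficientsAt (U : Set E)
    (ω : E → ContinuousMultilinearMap ℝ (fun _ : ι ↦ E) F) (x : E) : Prop :=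
  ∃ V : Set E, IsOpen V ∧ x ∈ V ∧ V ⊆ U ∧ ∃ u : E → E,
    ContDiffOn ℝ (⊤ : ℕ∞) u V ∧ InjOn u V ∧ IsOpen (u '' V) ∧
    (∀ y ∈ V, Function.Bijective (fderiv ℝ u y)) ∧
    ∃ c : ContinuousMultilinearMap ℝ (fun _ : ι ↦ E) F,
      ∀ y ∈ V, ∀ v : ι → E, ω y v = c fun i ↦ fderiv ℝ u y (v i)

theorem HasConstantCoefficientsAt.mono {U V : Set E}
    {ω : E → ContinuousMultilinearMap ℝ (fun _ : ι ↦ E) F} {x : E}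
    (h : HasConstantCoefficientsAt V ω x) (hVU : V ⊆ U) :
    HasConstantCoefficientsAt U ω x := by
  obtain ⟨W, hW, hxW, hWV, hu⟩ := h
  exact ⟨W, hW, hxW, hWV.trans hVU, hu⟩

theorem injective_of_isUnit_clm {A : E →L[ℝ] E} (hA : IsUnit A) : Function.Injective A :=
  Function.LeftInverse.injective fun v ↦ congr($(Ring.inverse_mul_cancel _ hA) v)

variable [Fintype ι]

namespace ChristoffelField

variable {Γ : ChristoffelField E} {V : Set E} {ω : E → ContinuousMultilinearMap ℝ (fun _ : ι ↦ E) F}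
  {u : E → E} {x y : E}

/-- Vanishing torsion on `V`. -/
def TorsionFreeOn (Γ : ChristoffelField E) (V : Set E) : Prop :=
  ∀ y ∈ V, ∀ v w : E, Γ y v w = Γ y w v

/-- Vanishing curvature on `V`. -/
def FlatOn (Γ : ChristoffelField E) (V : Set E) : Prop :=
  ∀ y ∈ V, ∀ v w z : E,
    fderiv ℝ (fun t ↦ Γ t w z) y v - fderiv ℝ (fun t ↦ Γ t v z) y w +
      Γ y v (Γ y w z) - Γ y w (Γ y v z) = 0

/-- The field of multilinear maps `ω` is parallel on `V`, that is, `∇ω = 0`. -/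
def ParallelOn [DecidableEq ι] (Γ : ChristoffelField E)
    (ω : E → ContinuousMultilinearMap ℝ (fun _ : ι ↦ E) F) (V : Set E) : Prop :=
  ∀ y ∈ V, ∀ (v : E) (z : ι → E),
    fderiv ℝ ω y v z = ∑ h, ω y (Function.update z h (Γ y v (z h)))

/-- The pullback `(Du)⁻¹ D²u` of the trivial connection along a local diffeomorphism `u`. -/
noncomputable def pullback (u : E → E) : ChristoffelField E := fun y ↦
  (ContinuousLinearMap.compL ℝ E E E (Ring.inverse (fderiv ℝ u y))) ∘L fderiv ℝ (fderiv ℝ u) y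

section Pullback

theorem fderiv_pullback_apply (hy : IsUnit (fderiv ℝ u y)) (v w : E) :
    fderiv ℝ u y (pullback u y v w) = fderiv ℝ (fderiv ℝ u) y v w :=
  congr($(Ring.mul_inverse_cancel _ hy) (fderiv ℝ (fderiv ℝ u) y v w))

theorem contDiffAt_pullback [CompleteSpace E] {n : WithTop ℕ∞} (hu : ContDiffAt ℝ (n + 2) u y)
    (hy : IsUnit (fderiv ℝ u y)) : ContDiffAt ℝ n (pullback u) y := by
  have hu₁ : ContDiffAt ℝ (n + 1) (fderiv ℝ u) y :=
    hu.fderiv_right (by rw [add_assoc, one_add_one_eq_two])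
  have hinv : ContDiffAt ℝ n Ring.inverse (fderiv ℝ u y) := by
    obtain ⟨A, hA⟩ := hy
    exact hA ▸ contDiffAt_ringInverse ℝ A
  exact ((ContinuousLinearMap.compL ℝ E E E).contDiff.contDiffAt.comp y
    (hinv.comp y (hu₁.of_le le_self_add))).clm_comp (hu₁.fderiv_right le_rfl)

theorem torsionFreeOn_pullback (hu : ∀ y ∈ V, ContDiffAt ℝ 2 u y)
    (hu' : ∀ y ∈ V, IsUnit (fderiv ℝ u y)) : (pullback u).TorsionFreeOn V := fun y hy v w ↦ by
  have hsymm : IsSymmSndFDerivAt ℝ u y := (hu y hy).isSymmSndFDerivAt (by simp)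
  refine injective_of_isUnit_clm (hu' y hy) ?_
  rw [fderiv_pullback_apply (hu' y hy), fderiv_pullback_apply (hu' y hy), hsymm.eq]

theorem fderiv_fderiv_pullback_apply [CompleteSpace E] (hu : ContDiffAt ℝ 3 u y)
    (hy : IsUnit (fderiv ℝ u y)) (v w z : E) :
    fderiv ℝ u y (fderiv ℝ (fun t ↦ pullback u t w z) y v) =
      fderiv ℝ (fderiv ℝ (fderiv ℝ u)) y v w z - fderiv ℝ (fderiv ℝ u) y v (pullback u y w z) := by
  have hu₁ : ContDiffAt ℝ 2 (fderiv ℝ u) y := hu.fderiv_right (by norm_num)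
  have hu₂ : ContDiffAt ℝ 1 (fderiv ℝ (fderiv ℝ u)) y := hu₁.fderiv_right (by norm_num)
  have hΓ : DifferentiableAt ℝ (fun t ↦ pullback u t w z) y :=
    (((contDiffAt_pullback (n := 1) (by norm_num [hu]) hy).differentiableAt one_ne_zero).clm_apply
      (differentiableAt_const w)).clm_apply (differentiableAt_const z)
  have hleft := (hu₁.differentiableAt two_ne_zero).hasFDerivAt.clm_apply hΓ.hasFDerivAt
  have hright := ((hu₂.differentiableAt one_ne_zero).hasFDerivAt.clm_apply
    (hasFDerivAt_const w y)).clm_apply (hasFDerivAt_const z y)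
  have hunit : ∀ᶠ t in 𝓝 y, IsUnit (fderiv ℝ u t) :=
    hu₁.continuousAt.eventually (Units.isOpen.mem_nhds hy)
  have heq := hleft.unique (hright.congr_of_eventuallyEq
    (hunit.mono fun t ht ↦ fderiv_pullback_apply ht w z))
  have hv := congr($heq v)
  simp only [add_apply, ContinuousLinearMap.comp_apply, ContinuousLinearMap.flip_apply,
    zero_apply, map_zero, zero_add] at hv
  exact eq_sub_of_add_eq hv

theorem flatOn_pullback [CompleteSpace E] (hu : ∀ y ∈ V, ContDiffAt ℝ 3 u y)
    (hu' : ∀ y ∈ V, IsUnit (fderiv ℝ u y)) : (pullback u).FlatOn V := fun y hy v w z ↦ by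
  have hsymm : IsSymmSndFDerivAt ℝ (fderiv ℝ u) y :=
    ContDiffAt.isSymmSndFDerivAt (n := 2) ((hu y hy).fderiv_right (by norm_num)) (by simp)
  refine injective_of_isUnit_clm (hu' y hy) ?_
  simp only [map_sub, map_add, map_zero, fderiv_fderiv_pullback_apply (hu y hy) (hu' y hy),
    fderiv_pullback_apply (hu' y hy), hsymm.eq v w]
  abel

theorem parallelOn_pullback [DecidableEq ι] (hV : IsOpen V) (hu : ∀ y ∈ V, ContDiffAt ℝ 2 u y)
    (hu' : ∀ y ∈ V, IsUnit (fderiv ℝ u y)) (hω : DifferentiableOn ℝ ω V)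
    {c : ContinuousMultilinearMap ℝ (fun _ : ι ↦ E) F}
    (hc : ∀ y ∈ V, ∀ v : ι → E, ω y v = c fun i ↦ fderiv ℝ u y (v i)) :
    (pullback u).ParallelOn ω V := fun y hy v z ↦ by
  have hdu : HasFDerivAt (fderiv ℝ u) (fderiv ℝ (fderiv ℝ u) y) y :=
    (((hu y hy).fderiv_right (m := 1) (by norm_num)).differentiableAt one_ne_zero).hasFDerivAt
  have hleft :=
    (hω.differentiableAt (hV.mem_nhds hy)).hasFDerivAt.continuousMultilinear_apply_const z
  have hright := HasFDerivAt.multilinear_comp (f := c)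
    fun i ↦ hdu.clm_apply (hasFDerivAt_const (z i) y)
  have hv := congr($(hleft.unique (hright.congr_of_eventuallyEq
    (mem_of_superset (hV.mem_nhds hy) fun t ht ↦ hc t ht z))) v)
  simp only [ContinuousLinearMap.flipMultilinear_apply_apply, ContinuousLinearMap.comp_zero,
    zero_add, sum_apply, ContinuousLinearMap.comp_apply, ContinuousLinearMap.flip_apply,
    ContinuousMultilinearMap.toContinuousLinearMap_apply] at hv
  rw [hv]
  refine Finset.sum_congr rfl fun i _ ↦ ?_
  rw [hc y hy]
  congr 1
  ext j
  rcases eq_or_ne j i with rfl | hji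
  · simp [fderiv_pullback_apply (hu' y hy)]
  · simp [hji]

end Pullback

section Coframe

set_option maxSynthPendingDepth 3

/-- The total differential equation `dA = A ∘ Γ` whose solutions `A` are the coframes all of whose
entries are parallel `1`-forms. -/
noncomputable def coframeSystem (Γ : ChristoffelField E) :
    E → E →L[ℝ] (E →L[ℝ] E) →L[ℝ] (E →L[ℝ] E) := fun y ↦
  (ContinuousLinearMap.compL ℝ E E E).flip ∘L Γ y

theorem contDiffOn_coframeSystem {n : WithTop ℕ∞} (hΓ : ContDiffOn ℝ n Γ V) :
    ContDiffOn ℝ n (coframeSystem Γ) V :=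
  contDiffOn_const.clm_comp hΓ

theorem FlatOn.isFlatSystemOn_coframeSystem (hflat : Γ.FlatOn V)
    (hΓ : ∀ y ∈ V, DifferentiableAt ℝ Γ y) : IsFlatSystemOn (coframeSystem Γ) V := by
  intro y hy v w
  have hfderiv (v w z : E) : fderiv ℝ (fun t ↦ Γ t w z) y v = fderiv ℝ Γ y v w z := by
    rw [(((hΓ y hy).hasFDerivAt.clm_apply (hasFDerivAt_const w y)).clm_apply
      (hasFDerivAt_const z y)).fderiv]
    simp
  have hsystem (v w : E) : fderiv ℝ (coframeSystem Γ) y v w =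
      (ContinuousLinearMap.compL ℝ E E E).flip (fderiv ℝ Γ y v w) := by
    unfold coframeSystem
    rw [((hasFDerivAt_const _ y).clm_comp (hΓ y hy).hasFDerivAt).fderiv]
    simp
  ext A z
  have hz := hflat y hy v w z
  rw [hfderiv, hfderiv] at hz
  have hAz := congr(A $hz)
  simp only [map_add, map_sub, map_zero] at hAz
  simp only [hsystem, add_apply, ContinuousLinearMap.comp_apply]
  simp only [coframeSystem, ContinuousLinearMap.comp_apply, ContinuousLinearMap.flip_apply,
    ContinuousLinearMap.compL_apply]
  linear_combination (norm := module) hAz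

variable {A : E → E →L[ℝ] E}

theorem exists_hasFDerivAt_coframe [CompleteSpace E] {r : ℝ}
    (htor : Γ.TorsionFreeOn (ball x r)) (hA : IsSolutionOn (coframeSystem Γ) A (ball x r)) :
    ∃ u : E → E, ∀ y ∈ ball x r, HasFDerivAt u (A y) y := by
  refine (convex_ball x r).exists_forall_hasFDerivAt_of_fderiv_symmetric isOpen_ball
    (fun y hy ↦ (hA y hy).differentiableAt.differentiableWithinAt) fun y hy v w ↦ ?_
  rw [(hA y hy).fderiv]
  simp [coframeSystem, htor y hy v w]

theorem exists_affineCoordinates [CompleteSpace E] (hV : IsOpen V) (hx : x ∈ V)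
    (hΓ : ContDiffOn ℝ (⊤ : ℕ∞) Γ V) (htor : Γ.TorsionFreeOn V) (hflat : Γ.FlatOn V) :
    ∃ r > 0, ball x r ⊆ V ∧ ∃ u : E → E, HasFDerivAt u (1 : E →L[ℝ] E) x ∧
      ContDiffOn ℝ (⊤ : ℕ∞) u (ball x r) ∧
      IsSolutionOn (coframeSystem Γ) (fderiv ℝ u) (ball x r) := by
  have hsmooth := contDiffOn_coframeSystem hΓ
  have hsystem : IsFlatSystemOn (coframeSystem Γ) V := hflat.isFlatSystemOn_coframeSystem
    fun y hy ↦ (hΓ.contDiffAt (hV.mem_nhds hy)).differentiableAt (by simp)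
  obtain ⟨r, hr, hrV, A, hAx, hA⟩ :=
    hsystem.exists_isSolutionOn hV (hsmooth.of_le (by simp)) hx (1 : E →L[ℝ] E)
  obtain ⟨u, hu⟩ := exists_hasFDerivAt_coframe (fun y hy ↦ htor y (hrV hy)) hA
  refine ⟨r, hr, hrV, u, hAx ▸ hu x (mem_ball_self hr),
    (contDiffOn_infty_iff_fderiv_of_isOpen isOpen_ball).2
      ⟨fun y hy ↦ (hu y hy).differentiableAt.differentiableWithinAt,
        (hA.contDiffOn isOpen_ball (hsmooth.mono hrV)).congr fun y hy ↦ (hu y hy).fderiv⟩,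
    fun y hy ↦ ?_⟩
  rw [(hu y hy).fderiv]
  exact (hA y hy).congr_of_eventuallyEq
    (mem_of_superset (isOpen_ball.mem_nhds hy) fun t ht ↦ (hu t ht).fderiv)

theorem hasFDerivAt_inverse_coframe_apply [CompleteSpace E]
    (hA : HasFDerivAt A ((coframeSystem Γ y).flip (A y)) y) (hy : IsUnit (A y)) (z : E) :
    HasFDerivAt (fun t ↦ Ring.inverse (A t) z) (-(Γ y).flip (Ring.inverse (A y) z)) y := by
  obtain ⟨a, ha⟩ := hy
  have hinv := hasFDerivAt_ringInverse (𝕜 := ℝ) a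
  rw [ha] at hinv
  refine ((hinv.comp y hA).clm_apply (hasFDerivAt_const z y)).congr_fderiv ?_
  ext v
  have hcancel (w : E) : (↑a⁻¹ : E →L[ℝ] E) ((a : E →L[ℝ] E) w) = w := congr($(a.inv_mul) w)
  simp [coframeSystem, hcancel, ← ha]

theorem ParallelOn.hasFDerivAt_apply [DecidableEq ι] (hpar : Γ.ParallelOn ω V) (hy : y ∈ V)
    (hω : DifferentiableAt ℝ ω y) {X : ι → E → E}
    (hX : ∀ i, HasFDerivAt (X i) (-(Γ y).flip (X i y)) y) :
    HasFDerivAt (fun t ↦ ω t fun i ↦ X i t) (0 : E →L[ℝ] F) y := by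
  refine (hω.hasFDerivAt.continuousMultilinearMap_apply hX).congr_fderiv ?_
  ext v
  simp [hpar y hy]

theorem ParallelOn.apply_eq_of_coframe [CompleteSpace E] [DecidableEq ι] {r : ℝ}
    (hpar : Γ.ParallelOn ω (ball x r)) (hω : ∀ y ∈ ball x r, DifferentiableAt ℝ ω y)
    (hA : IsSolutionOn (coframeSystem Γ) A (ball x r)) (hunit : ∀ y ∈ ball x r, IsUnit (A y))
    (hAx : A x = 1) (hy : y ∈ ball x r) (v : ι → E) : ω y v = ω x fun i ↦ A y (v i) := by
  have hderiv (z : ι → E) (t : E) (ht : t ∈ ball x r) :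
      HasFDerivAt (fun t ↦ ω t fun i ↦ Ring.inverse (A t) (z i)) (0 : E →L[ℝ] F) t :=
    hpar.hasFDerivAt_apply ht (hω t ht) fun i ↦
      hasFDerivAt_inverse_coframe_apply (hA t ht) (hunit t ht) (z i)
  have hconst := isOpen_ball.is_const_of_fderiv_eq_zero (convex_ball x r).isPreconnected
    (fun t ht ↦ (hderiv (fun i ↦ A y (v i)) t ht).differentiableAt.differentiableWithinAt)
    (fun t ht ↦ (hderiv _ t ht).fderiv) hy
    (mem_ball_self ((norm_nonneg _).trans_lt (mem_ball_iff_norm.1 hy)))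
  have hcancel (w : E) : Ring.inverse (A y) (A y w) = w :=
    congr($(Ring.inverse_mul_cancel _ (hunit y hy)) w)
  simpa [hAx, hcancel] using hconst

end Coframe

end ChristoffelField

open ChristoffelField

variable {U V : Set E} {ω : E → ContinuousMultilinearMap ℝ (fun _ : ι ↦ E) F}
  {Γ : ChristoffelField E} {x : E}

theorem HasConstantCoefficientsAt.exists_connection [CompleteSpace E] [DecidableEq ι]
    (h : HasConstantCoefficientsAt U ω x) (hω : DifferentiableOn ℝ ω U) :
    ∃ V : Set E, IsOpen V ∧ x ∈ V ∧ V ⊆ U ∧ ∃ Γ : ChristoffelField E,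
      ContDiffOn ℝ (⊤ : ℕ∞) Γ V ∧ Γ.TorsionFreeOn V ∧ Γ.FlatOn V ∧ Γ.ParallelOn ω V := by
  obtain ⟨V, hV, hxV, hVU, u, hu, -, -, hbij, c, hc⟩ := h
  have huV {n : ℕ} : ∀ y ∈ V, ContDiffAt ℝ n u y := fun y hy ↦
    (hu.contDiffAt (hV.mem_nhds hy)).of_le (mod_cast le_top)
  have hunit : ∀ y ∈ V, IsUnit (fderiv ℝ u y) := fun y hy ↦
    ContinuousLinearMap.isUnit_iff_bijective.2 (hbij y hy)
  exact ⟨V, hV, hxV, hVU, pullback u,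
    fun y hy ↦ (contDiffAt_pullback (hu.contDiffAt (hV.mem_nhds hy))
      (hunit y hy)).contDiffWithinAt,
    torsionFreeOn_pullback huV hunit, flatOn_pullback huV hunit,
    parallelOn_pullback hV huV hunit (hω.mono hVU) hc⟩

theorem ChristoffelField.ParallelOn.hasConstantCoefficientsAt [CompleteSpace E] [DecidableEq ι]
    (hpar : Γ.ParallelOn ω V) (hV : IsOpen V) (hx : x ∈ V) (hω : DifferentiableOn ℝ ω V)
    (hΓ : ContDiffOn ℝ (⊤ : ℕ∞) Γ V) (htor : Γ.TorsionFreeOn V) (hflat : Γ.FlatOn V) :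
    HasConstantCoefficientsAt V ω x := by
  obtain ⟨r, hr, hrV, u, hux, hu, hcoframe⟩ := exists_affineCoordinates hV hx hΓ htor hflat
  have hxr := mem_ball_self (x := x) hr
  have hunit : ∀ᶠ y in 𝓝 x, IsUnit (fderiv ℝ u y) :=
    (hcoframe x hxr).continuousAt.eventually
      (Units.isOpen.mem_nhds (by rw [hux.fderiv]; exact isUnit_one))
  obtain ⟨ρ, hρ, hball⟩ := eventually_nhds_iff_ball.1 (hunit.and (isOpen_ball.mem_nhds hxr))
  have hρr : ball x ρ ⊆ ball x r := fun y hy ↦ (hball y hy).2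
  have hux' : HasFDerivAt u ((ContinuousLinearEquiv.refl ℝ E : E ≃L[ℝ] E) : E →L[ℝ] E) x := hux
  have huc : ContDiffAt ℝ (⊤ : ℕ∞) u x := hu.contDiffAt (isOpen_ball.mem_nhds hxr)
  let e := huc.toOpenPartialHomeomorph u hux' (by simp)
  have hW : IsOpen (e.source ∩ ball x ρ) := e.open_source.inter isOpen_ball
  exact ⟨e.source ∩ ball x ρ, hW,
    ⟨huc.mem_toOpenPartialHomeomorph_source hux' (by simp), mem_ball_self hρ⟩,
    inter_subset_right.trans (hρr.trans hrV), u, hu.mono (inter_subset_right.trans hρr),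
    e.injOn.mono inter_subset_left, e.isOpen_image_of_subset_source hW inter_subset_left,
    fun y hy ↦ ContinuousLinearMap.isUnit_iff_bijective.1 (hball y hy.2).1, ω x,
    fun y hy ↦ ParallelOn.apply_eq_of_coframe (fun t ht ↦ hpar t (hrV (hρr ht)))
      (fun t ht ↦ hω.differentiableAt (hV.mem_nhds (hrV (hρr ht))))
      (fun t ht ↦ hcoframe t (hρr ht)) (fun t ht ↦ (hball t ht).1) hux.fderiv hy.2⟩

theorem constantCoefficientsForm_iff_flatConnection_general [CompleteSpace E] [DecidableEq ι]
    (hω : DifferentiableOn ℝ ω U) :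
    HasConstantCoefficientsAt U ω x ↔
      ∃ V : Set E, IsOpen V ∧ x ∈ V ∧ V ⊆ U ∧ ∃ Γ : ChristoffelField E,
        ContDiffOn ℝ (⊤ : ℕ∞) Γ V ∧ Γ.TorsionFreeOn V ∧ Γ.FlatOn V ∧ Γ.ParallelOn ω V := by
  refine ⟨fun h ↦ h.exists_connection hω, ?_⟩
  rintro ⟨V, hV, hxV, hVU, Γ, hΓ, htor, hflat, hpar⟩
  exact (hpar.hasConstantCoefficientsAt hV hxV (hω.mono hVU) hΓ htor hflat).mono hVU

end Connection

/-- Proposition 2.1, covariant case: a smooth `p`-form `ω` has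
constant coefficients near `x` iff there are an open neighbourhood `V ∋ x` and a
smooth torsion-free flat Christoffel field `Γ` on `V` with `∇ω = 0` on `V`, i.e.
`(Dω_y(v))(z₁,…,z_p) = Σ_h ω_y(z₁,…,Γ_y(v,z_h),…,z_p)`. -/
theorem constantCoefficientsForm_iff_flatConnection (n p : ℕ)
    (U : Set (Fin n → ℝ)) (hU : IsOpen U)
    (ω : (Fin n → ℝ) → ((Fin n → ℝ) [×p]→L[ℝ] ℝ))
    (hω : ContDiffOn ℝ (⊤ : ℕ∞) ω U)
    (halt : ∀ y ∈ U, ∀ v : Fin p → (Fin n → ℝ), ∀ i j, i ≠ j → v i = v j → ω y v = 0)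
    (x : Fin n → ℝ) (hx : x ∈ U) :
    HasConstantCoefficientsFormAt n p U ω x ↔
      ∃ V : Set (Fin n → ℝ), IsOpen V ∧ x ∈ V ∧ V ⊆ U ∧
        ∃ Γ : (Fin n → ℝ) → ((Fin n → ℝ) →L[ℝ] (Fin n → ℝ) →L[ℝ] (Fin n → ℝ)),
          ContDiffOn ℝ (⊤ : ℕ∞) Γ V ∧
          -- torsion-free
          (∀ y ∈ V, ∀ v w : Fin n → ℝ, Γ y v w = Γ y w v) ∧
          -- flat (vanishing curvature)
          (∀ y ∈ V, ∀ v w z : Fin n → ℝ,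
            fderiv ℝ (fun t => Γ t w z) y v - fderiv ℝ (fun t => Γ t v z) y w +
              Γ y v (Γ y w z) - Γ y w (Γ y v z) = 0) ∧
          -- ∇ω = 0
          (∀ y ∈ V, ∀ v : Fin n → ℝ, ∀ z : Fin p → (Fin n → ℝ),
            fderiv ℝ ω y v z =
              ∑ h : Fin p, ω y (Function.update z h (Γ y v (z h)))) :=
  constantCoefficientsForm_iff_flatConnection_general (hω.differentiableOn (by simp))
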